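/- Let l ≥ 1 be an integer, ρ₀ > 0, and let η ∈ C_c^∞(ℝ^l) be supported in the annulus {λ ∈ ℝ^l : 1/2 ≤ ‖λ‖ ≤ 2}. For every multi-index α there exists a constant c = c(η, α, l, ρ₀) > 0 such that for all integers k ≥ 0 and all γ ∈ ℝ, ‖ ∂^α [ λ ↦ η(λ) (4^k ‖λ‖² + ρ₀²)^{iγ} ] ‖_{L²(ℝ^l)} ≤ c (1 + |γ|)^{|α|}. -/

import Mathlib

/-!
By the Leibniz and chain rules, the derivatives of `η · (a q + b)^z` are controlled by those of `η`
and `q` on the support of `η` and by those of the one-variable power `t ↦ (a t + b)^z`. The `n`-th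
derivative of the latter is `z (z - 1) ⋯ (z - n + 1) aⁿ (a t + b)^(z - n)`, which for imaginary `z`
has modulus at most `n! (1 + |z|)ⁿ (a / (a t + b))ⁿ`. Since `a / (a t + b) ≤ 1 / t` for all `a > 0`
and `b ≥ 0`, the estimate is uniform in `a` and `b` wherever `q` is bounded below. In the theorem
`q = ‖·‖²`, `a = 4 ^ k` and `b = ρ₀²`.
-/

open Real MeasureTheory

/-- Iterated partial derivative of a function on ℝ^l along a list of coordinate directions. -/
noncomputable def mderiv {l : ℕ} : List (Fin l) → (EuclideanSpace ℝ (Fin l) → ℂ) →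
    EuclideanSpace ℝ (Fin l) → ℂ
  | [], f => f
  | i :: L, f => fun x => fderiv ℝ (mderiv L f) x (EuclideanSpace.single i 1)

/-- The partial derivative ∂^α of a function on ℝ^l associated with the multi-index
α : Fin l → ℕ (α i derivatives in the i-th coordinate direction). -/
noncomputable def partialD {l : ℕ} (α : Fin l → ℕ) (f : EuclideanSpace ℝ (Fin l) → ℂ) :
    EuclideanSpace ℝ (Fin l) → ℂ :=
  mderiv ((List.finRange l).flatMap fun i => List.replicate (α i) i) f

open Set
open scoped Nat ContDiff

section AffineCpow

lemma norm_descPochhammer_eval_le {R : Type*} [SeminormedRing R] [NormOneClass R] (n : ℕ) (z : R) :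
    ‖(descPochhammer R n).eval z‖ ≤ n ! * (1 + ‖z‖) ^ n := by
  induction n with
  | zero => simp
  | succ n ih =>
    have hfactor : ‖z - n‖ ≤ (n + 1) * (1 + ‖z‖) :=
      calc ‖z - n‖ ≤ ‖z‖ + n := (norm_sub_le _ _).trans (by
          gcongr; simpa using Nat.norm_cast_le (α := R) n)
        _ ≤ (n + 1) * (1 + ‖z‖) := by nlinarith [norm_nonneg z, n.cast_nonneg (α := ℝ)]
    calc ‖(descPochhammer R (n + 1)).eval z‖
        ≤ ‖(descPochhammer R n).eval z‖ * ‖z - n‖ := by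
          rw [descPochhammer_succ_eval]; exact norm_mul_le _ _
      _ ≤ (n ! * (1 + ‖z‖) ^ n) * ((n + 1) * (1 + ‖z‖)) := by gcongr
      _ = (n + 1)! * (1 + ‖z‖) ^ (n + 1) := by push_cast [Nat.factorial_succ]; ring

variable {a b t : ℝ} {z : ℂ}

lemma hasDerivAt_affine_cpow (ht : 0 < a * t + b) (z : ℂ) :
    HasDerivAt (fun s : ℝ => ((a * s + b : ℝ) : ℂ) ^ z)
      (z * ((a * t + b : ℝ) : ℂ) ^ (z - 1) * a) t := by
  have haffine : HasDerivAt (fun s : ℝ => ((a * s + b : ℝ) : ℂ)) a t := by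
    simpa using (((hasDerivAt_id t).const_mul a).add_const b).ofReal_comp
  exact (Complex.hasStrictDerivAt_cpow_const
    (Complex.ofReal_mem_slitPlane.2 ht)).hasDerivAt.comp t haffine

lemma iteratedDerivWithin_affine_cpow {s : Set ℝ} (hs : IsOpen s) (hpos : ∀ t ∈ s, 0 < a * t + b)
    (n : ℕ) (z : ℂ) :
    EqOn (iteratedDerivWithin n (fun t : ℝ => ((a * t + b : ℝ) : ℂ) ^ z) s)
      (fun t => (descPochhammer ℂ n).eval z * a ^ n * ((a * t + b : ℝ) : ℂ) ^ (z - n)) s := by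
  induction n with
  | zero => intro t _; simp
  | succ n ih =>
    intro t ht
    rw [iteratedDerivWithin_succ, derivWithin_congr ih (ih ht), derivWithin_of_isOpen hs ht,
      ((hasDerivAt_affine_cpow (hpos t ht) (z - n)).const_mul _).deriv, descPochhammer_succ_eval,
      Nat.cast_succ, sub_sub]
    ring

lemma norm_iteratedDerivWithin_affine_cpow_le (ha : 0 < a) (hb : 0 ≤ b) (ht : 0 < t) (n : ℕ)
    (z : ℂ) :
    ‖iteratedDerivWithin n (fun s : ℝ => ((a * s + b : ℝ) : ℂ) ^ z) (Ioi 0) t‖ ≤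
      n ! * ((1 + ‖z‖) / t) ^ n * (a * t + b) ^ z.re := by
  have hpos : ∀ s ∈ Ioi (0 : ℝ), 0 < a * s + b := fun s (hs : 0 < s) => by positivity
  have hv : 0 < a * t + b := hpos t ht
  have hratio : a / (a * t + b) ≤ 1 / t := by
    rw [div_le_div_iff₀ hv ht]; linarith
  rw [iteratedDerivWithin_affine_cpow isOpen_Ioi hpos n z ht, norm_mul, norm_mul, norm_pow,
    Complex.norm_of_nonneg ha.le, Complex.norm_cpow_eq_rpow_re_of_pos hv]
  calc ‖(descPochhammer ℂ n).eval z‖ * a ^ n * (a * t + b) ^ (z - n).re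
      = ‖(descPochhammer ℂ n).eval z‖ * (a / (a * t + b)) ^ n * (a * t + b) ^ z.re := by
        rw [Complex.sub_re, Complex.natCast_re, rpow_sub_natCast hv.ne']; ring
    _ ≤ n ! * (1 + ‖z‖) ^ n * (1 / t) ^ n * (a * t + b) ^ z.re := by
        gcongr
        exact norm_descPochhammer_eval_le n z
    _ = n ! * ((1 + ‖z‖) / t) ^ n * (a * t + b) ^ z.re := by simp only [div_pow, one_pow]; ring

end AffineCpow

section IteratedFDeriv

variable {E : Type*} [NormedAddCommGroup E] [NormedSpace ℝ E]

lemma norm_iteratedFDeriv_mul_le_of_isOpen {A : Type*} [NormedRing A] [NormedAlgebra ℝ A]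
    {f g : E → A} {s : Set E} {x : E} {n : ℕ} {C D : ℝ} (hs : IsOpen s) (hx : x ∈ s)
    (hf : ContDiffOn ℝ n f s) (hg : ContDiffOn ℝ n g s)
    (hC : ∀ i ≤ n, ‖iteratedFDeriv ℝ i f x‖ ≤ C) (hD : ∀ i ≤ n, ‖iteratedFDeriv ℝ i g x‖ ≤ D) :
    ‖iteratedFDeriv ℝ n (fun y => f y * g y) x‖ ≤ 2 ^ n * C * D := by
  have hC₀ : 0 ≤ C := (norm_nonneg _).trans (hC 0 n.zero_le)
  have hleibniz := norm_iteratedFDerivWithin_mul_le hf hg hs.uniqueDiffOn hx le_rfl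
  simp only [iteratedFDerivWithin_of_isOpen _ hs hx] at hleibniz
  calc ‖iteratedFDeriv ℝ n (fun y => f y * g y) x‖
      ≤ ∑ i ∈ Finset.range (n + 1), n.choose i * ‖iteratedFDeriv ℝ i f x‖ *
          ‖iteratedFDeriv ℝ (n - i) g x‖ := hleibniz
    _ ≤ ∑ i ∈ Finset.range (n + 1), n.choose i * C * D := by
        gcongr with i hi
        · exact hC i (Finset.mem_range_succ_iff.1 hi)
        · exact hD _ (n.sub_le i)
    _ = 2 ^ n * C * D := by
        rw [← Finset.sum_mul, ← Finset.sum_mul]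
        exact_mod_cast congrArg (fun m : ℕ => (m : ℝ) * C * D) (Nat.sum_range_choose n)

lemma exists_bound_iteratedFDeriv_of_isCompact {F : Type*} [NormedAddCommGroup F] [NormedSpace ℝ F]
    {f : E → F} {K : Set E} {n : ℕ} (hK : IsCompact K) (hf : ContDiff ℝ n f) :
    ∃ C, 1 ≤ C ∧ ∀ i ≤ n, ∀ x ∈ K, ‖iteratedFDeriv ℝ i f x‖ ≤ C := by
  have hcont : Continuous fun x => ∑ i ∈ Finset.range (n + 1), ‖iteratedFDeriv ℝ i f x‖ :=
    continuous_finsetSum _ fun i hi =>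
      (hf.continuous_iteratedFDeriv (mod_cast Finset.mem_range_succ_iff.1 hi)).norm
  obtain ⟨C, hC⟩ := hK.bddAbove_image hcont.continuousOn
  refine ⟨max C 1, le_max_right _ _, fun i hi x hx => le_max_of_le_left ?_⟩
  exact (Finset.single_le_sum (f := fun i => ‖iteratedFDeriv ℝ i f x‖)
    (fun _ _ => norm_nonneg _) (Finset.mem_range_succ_iff.2 hi)).trans (hC (mem_image_of_mem _ hx))

variable {q : E → ℝ} {x : E} {a b : ℝ} {z : ℂ} {n : ℕ}

lemma contDiffAt_affine_cpow_comp {m : ℕ∞ω} (hq : ContDiffAt ℝ m q x) (hx : 0 < a * q x + b)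
    (z : ℂ) : ContDiffAt ℝ m (fun y => ((a * q y + b : ℝ) : ℂ) ^ z) x := by
  have hcpow : ContDiffAt ℂ m (fun w : ℂ => w ^ z) ((a * q x + b : ℝ) : ℂ) :=
    (analyticAt_id.cpow analyticAt_const (Complex.ofReal_mem_slitPlane.2 hx)).contDiffAt
  exact (hcpow.restrict_scalars ℝ).comp x
    (Complex.ofRealCLM.contDiff.contDiffAt.comp x ((contDiffAt_const.mul hq).add contDiffAt_const))

lemma norm_iteratedFDeriv_affine_cpow_comp_le {δ B : ℝ} (hq : ContDiff ℝ n q)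
    (hδ : 0 < δ) (hδ₁ : δ ≤ 1) (hx : δ ≤ q x)
    (hB : ∀ i, 1 ≤ i → i ≤ n → ‖iteratedFDeriv ℝ i q x‖ ≤ B ^ i)
    (ha : 0 < a) (hb : 0 ≤ b) (hz : z.re = 0) :
    ‖iteratedFDeriv ℝ n (fun y => ((a * q y + b : ℝ) : ℂ) ^ z) x‖ ≤
      n ! ^ 2 * (B * ((1 + ‖z‖) / δ)) ^ n := by
  have hqx : 0 < q x := hδ.trans_le hx
  have hopen : IsOpen (q ⁻¹' Ioi 0) := isOpen_Ioi.preimage hq.continuous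
  have hcpow : ContDiffOn ℝ n (fun t : ℝ => ((a * t + b : ℝ) : ℂ) ^ z) (Ioi 0) :=
    fun t (ht : 0 < t) => (contDiffAt_affine_cpow_comp (q := fun s => s) contDiffAt_id
      (by positivity) z).contDiffWithinAt
  have houter : ∀ i ≤ n, ‖iteratedFDerivWithin ℝ i (fun t : ℝ => ((a * t + b : ℝ) : ℂ) ^ z)
      (Ioi 0) (q x)‖ ≤ n ! * ((1 + ‖z‖) / δ) ^ n := by
    intro i hi
    have hbase : 1 ≤ (1 + ‖z‖) / δ := by
      rw [one_le_div hδ]; linarith [norm_nonneg z]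
    calc _ ≤ i ! * ((1 + ‖z‖) / q x) ^ i := by
          simpa [norm_iteratedFDerivWithin_eq_norm_iteratedDerivWithin, hz]
            using norm_iteratedDerivWithin_affine_cpow_le ha hb hqx i z
      _ ≤ n ! * ((1 + ‖z‖) / δ) ^ i := by gcongr
      _ ≤ n ! * ((1 + ‖z‖) / δ) ^ n := by gcongr
  have hcomp := norm_iteratedFDerivWithin_comp_le hcpow hq.contDiffOn le_rfl
    isOpen_Ioi.uniqueDiffOn hopen.uniqueDiffOn (mapsTo_preimage q _) hqx houter
    (D := B) fun i hi hin => by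
      rw [iteratedFDerivWithin_of_isOpen i hopen hqx]; exact hB i hi hin
  rw [iteratedFDerivWithin_of_isOpen n hopen hqx] at hcomp
  exact hcomp.trans_eq (by rw [mul_pow]; ring)

variable {η : E → ℂ}

lemma contDiff_mul_affine_cpow_comp {m : ℕ∞ω} (hη : ContDiff ℝ m η) (hq : ContDiff ℝ m q)
    (hpos : ∀ x ∈ tsupport η, 0 < q x) (ha : 0 < a) (hb : 0 ≤ b) (z : ℂ) :
    ContDiff ℝ m fun x => η x * ((a * q x + b : ℝ) : ℂ) ^ z := by
  refine contMDiff_iff_contDiff.1 <| contMDiff_of_tsupport fun x hx =>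
    contMDiffAt_iff_contDiffAt.2 <| hη.contDiffAt.mul ?_
  have hqx : 0 < q x := hpos x (tsupport_mul_subset_left hx)
  exact contDiffAt_affine_cpow_comp hq.contDiffAt (by positivity) z

lemma norm_iteratedFDeriv_mul_affine_cpow_comp_le {δ A B : ℝ} (hη : ContDiff ℝ n η)
    (hq : ContDiff ℝ n q) (hδ : 0 < δ) (hδ₁ : δ ≤ 1) (hx : δ ≤ q x) (hB₁ : 1 ≤ B)
    (hA : ∀ i ≤ n, ‖iteratedFDeriv ℝ i η x‖ ≤ A) (hB : ∀ i ≤ n, ‖iteratedFDeriv ℝ i q x‖ ≤ B)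
    (ha : 0 < a) (hb : 0 ≤ b) (hz : z.re = 0) :
    ‖iteratedFDeriv ℝ n (fun y => η y * ((a * q y + b : ℝ) : ℂ) ^ z) x‖ ≤
      2 ^ n * A * (n ! ^ 2 * (B * ((1 + ‖z‖) / δ)) ^ n) := by
  have hcpow : ∀ i ≤ n, ‖iteratedFDeriv ℝ i (fun y => ((a * q y + b : ℝ) : ℂ) ^ z) x‖ ≤
      n ! ^ 2 * (B * ((1 + ‖z‖) / δ)) ^ n := by
    intro i hi
    have hbase : 1 ≤ B * ((1 + ‖z‖) / δ) := one_le_mul_of_one_le_of_one_le hB₁ <| by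
      rw [one_le_div hδ]; linarith [norm_nonneg z]
    calc _ ≤ i ! ^ 2 * (B * ((1 + ‖z‖) / δ)) ^ i :=
          norm_iteratedFDeriv_affine_cpow_comp_le (hq.of_le (mod_cast hi)) hδ hδ₁ hx
            (fun j hj hji => (hB j (hji.trans hi)).trans (le_self_pow₀ hB₁ (by lia))) ha hb hz
      _ ≤ n ! ^ 2 * (B * ((1 + ‖z‖) / δ)) ^ n := by gcongr
  have hsmooth : ContDiffOn ℝ n (fun y => ((a * q y + b : ℝ) : ℂ) ^ z) (q ⁻¹' Ioi 0) :=
    fun y (hy : 0 < q y) =>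
      (contDiffAt_affine_cpow_comp hq.contDiffAt (by positivity) z).contDiffWithinAt
  exact norm_iteratedFDeriv_mul_le_of_isOpen (isOpen_Ioi.preimage hq.continuous)
    (hδ.trans_le hx) hη.contDiffOn hsmooth hA hcpow

theorem exists_norm_iteratedFDeriv_mul_affine_cpow_comp_le (hη : ContDiff ℝ n η)
    (hηc : HasCompactSupport η) (hq : ContDiff ℝ n q) (hpos : ∀ x ∈ tsupport η, 0 < q x) :
    ∃ C, 0 < C ∧ ∀ a b : ℝ, 0 < a → 0 ≤ b → ∀ z : ℂ, z.re = 0 → ∀ x,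
      ‖iteratedFDeriv ℝ n (fun y => η y * ((a * q y + b : ℝ) : ℂ) ^ z) x‖ ≤
        C * (1 + ‖z‖) ^ n := by
  obtain ⟨A, hA₁, hA⟩ := exists_bound_iteratedFDeriv_of_isCompact hηc hη
  obtain ⟨B, hB₁, hB⟩ := exists_bound_iteratedFDeriv_of_isCompact hηc hq
  obtain ⟨ε, hε, hqε⟩ := hηc.isCompact.exists_forall_le' hq.continuous.continuousOn hpos
  set δ := min ε 1
  have hδ : 0 < δ := lt_min hε one_pos
  refine ⟨2 ^ n * A * (n ! ^ 2 * (B / δ) ^ n), by positivity, fun a b ha hb z hz x => ?_⟩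
  by_cases hx : x ∈ tsupport η
  · have hbound := norm_iteratedFDeriv_mul_affine_cpow_comp_le hη hq hδ (min_le_right ε 1)
      ((min_le_left ε 1).trans (hqε x hx)) hB₁ (fun i hi => hA i hi x hx)
      (fun i hi => hB i hi x hx) ha hb hz
    exact hbound.trans_eq (by simp only [mul_pow, div_pow]; ring)
  · have hzero := notMem_subset ((support_iteratedFDeriv_subset (𝕜 := ℝ) n).trans
      (tsupport_mul_subset_left (g := fun y => ((a * q y + b : ℝ) : ℂ) ^ z))) hx
    rw [Function.notMem_support.1 hzero, norm_zero]
    positivity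

end IteratedFDeriv

lemma sqrt_integral_norm_sq_le {X F : Type*} [MeasurableSpace X] [NormedAddCommGroup F]
    {μ : Measure X} {f : X → F} {K : Set X} {C : ℝ} (hK : μ K < ⊤)
    (hsupp : Function.support f ⊆ K) (hC : 0 ≤ C) (hf : ∀ x, ‖f x‖ ≤ C) :
    √(∫ x, ‖f x‖ ^ 2 ∂μ) ≤ C * √(μ.real K) := by
  have hint : ∫ x, ‖f x‖ ^ 2 ∂μ ≤ C ^ 2 * μ.real K := by
    rw [← setIntegral_eq_integral_of_forall_compl_eq_zero (s := K) fun x hx => by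
      simp [Function.notMem_support.1 (notMem_subset hsupp hx)]]
    refine (le_norm_self _).trans (norm_setIntegral_le_of_norm_le_const hK fun x _ => ?_)
    rw [norm_pow, norm_norm]
    exact pow_le_pow_left₀ (norm_nonneg _) (hf x) 2
  calc √(∫ x, ‖f x‖ ^ 2 ∂μ) ≤ √(C ^ 2 * μ.real K) := sqrt_le_sqrt hint
    _ = C * √(μ.real K) := by rw [sqrt_mul (sq_nonneg C), sqrt_sq hC]

section PartialDerivatives

variable {l : ℕ} {f : EuclideanSpace ℝ (Fin l) → ℂ}

lemma mderiv_eq_iteratedFDeriv (L : List (Fin l)) (hf : ContDiff ℝ L.length f) :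
    mderiv L f = fun x =>
      iteratedFDeriv ℝ L.length f x fun j => EuclideanSpace.single (L.get j) 1 := by
  induction L with
  | nil => rfl
  | cons i L ih =>
    funext x
    have hdiff : DifferentiableAt ℝ (iteratedFDeriv ℝ L.length f) x :=
      hf.differentiable_iteratedFDeriv (mod_cast L.length.lt_succ_self) x
    simp only [mderiv, ih (hf.of_le (mod_cast L.length.le_succ)),
      fderiv_continuousMultilinear_apply_const_apply hdiff]
    rfl

lemma norm_partialD_le_norm_iteratedFDeriv (α : Fin l → ℕ) (hf : ContDiff ℝ (∑ i, α i : ℕ) f)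
    (x : EuclideanSpace ℝ (Fin l)) :
    ‖partialD α f x‖ ≤ ‖iteratedFDeriv ℝ (∑ i, α i) f x‖ := by
  have hlength : ((List.finRange l).flatMap fun i => List.replicate (α i) i).length =
      ∑ i, α i := by
    simp [List.length_flatMap, List.sum_ofFn, ← List.ofFn_eq_map]
  rw [← hlength] at hf ⊢
  rw [partialD, mderiv_eq_iteratedFDeriv _ hf]
  exact (ContinuousMultilinearMap.le_opNorm _ _).trans (by simp)

lemma support_partialD_subset (α : Fin l → ℕ) (hf : ContDiff ℝ (∑ i, α i : ℕ) f) :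
    Function.support (partialD α f) ⊆ tsupport f := by
  refine subset_trans (fun x hx => ?_) (support_iteratedFDeriv_subset (𝕜 := ℝ) (∑ i, α i))
  exact norm_pos_iff.1 ((norm_pos_iff.2 hx).trans_le (norm_partialD_le_norm_iteratedFDeriv α hf x))

end PartialDerivatives

theorem multiplier_piece_L2_bound_general {l : ℕ} (α : Fin l → ℕ)
    {η : EuclideanSpace ℝ (Fin l) → ℂ} (hη : ContDiff ℝ (∑ i, α i : ℕ) η)
    (hηc : HasCompactSupport η) {q : EuclideanSpace ℝ (Fin l) → ℝ}
    (hq : ContDiff ℝ (∑ i, α i : ℕ) q) (hpos : ∀ x ∈ tsupport η, 0 < q x) :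
    ∃ c : ℝ, 0 < c ∧ ∀ a b : ℝ, 0 < a → 0 ≤ b → ∀ γ : ℝ,
      √(∫ x, ‖partialD α (fun y => η y * ((a * q y + b : ℝ) : ℂ) ^ (Complex.I * γ)) x‖ ^ 2) ≤
        c * (1 + |γ|) ^ (∑ i, α i) := by
  obtain ⟨C, hC, hbound⟩ := exists_norm_iteratedFDeriv_mul_affine_cpow_comp_le hη hηc hq hpos
  set V := (volume : Measure (EuclideanSpace ℝ (Fin l))).real (tsupport η)
  refine ⟨C * (√V + 1), by positivity, fun a b ha hb γ => ?_⟩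
  have hsmooth := contDiff_mul_affine_cpow_comp hη hq hpos ha hb (Complex.I * γ)
  have hsup : ∀ x, ‖partialD α (fun y => η y * ((a * q y + b : ℝ) : ℂ) ^ (Complex.I * γ)) x‖ ≤
      C * (1 + |γ|) ^ (∑ i, α i) := fun x =>
    (norm_partialD_le_norm_iteratedFDeriv α hsmooth x).trans <| by
      simpa using hbound a b ha hb (Complex.I * γ) (by simp) x
  calc _ ≤ C * (1 + |γ|) ^ (∑ i, α i) * √V :=
        sqrt_integral_norm_sq_le hηc.isCompact.measure_lt_top
          ((support_partialD_subset α hsmooth).trans tsupport_mul_subset_left) (by positivity) hsup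
    _ ≤ C * (1 + |γ|) ^ (∑ i, α i) * (√V + 1) := by gcongr; linarith
    _ = C * (√V + 1) * (1 + |γ|) ^ (∑ i, α i) := by ring

/-- For η ∈ C_c^∞(ℝ^l) supported in {1/2 ≤ ‖λ‖ ≤ 2} and every multi-index α there is
c > 0 such that for all k ∈ ℕ and γ ∈ ℝ,
‖∂^α[λ ↦ η(λ)(4^k‖λ‖² + ρ₀²)^{iγ}]‖_{L²(ℝ^l)} ≤ c (1 + |γ|)^{|α|}. -/
theorem multiplier_piece_L2_bound (l : ℕ) (hl : 1 ≤ l) (ρ₀ : ℝ) (hρ : 0 < ρ₀)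
    (η : EuclideanSpace ℝ (Fin l) → ℂ) (hη : ContDiff ℝ (⊤ : ℕ∞) η)
    (hsupp : Function.support η ⊆ {lam : EuclideanSpace ℝ (Fin l) |
      1 / 2 ≤ ‖lam‖ ∧ ‖lam‖ ≤ 2}) :
    ∀ α : Fin l → ℕ, ∃ c : ℝ, 0 < c ∧ ∀ (k : ℕ) (γ : ℝ),
      Real.sqrt (∫ lam : EuclideanSpace ℝ (Fin l),
          ‖partialD α (fun lam' => η lam' *
              ((4 ^ k * ‖lam'‖ ^ 2 + ρ₀ ^ 2 : ℝ) : ℂ) ^ (Complex.I * γ)) lam‖ ^ 2) ≤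
        c * (1 + |γ|) ^ (∑ i, α i) := by
  intro α
  have htsupp := closure_minimal hsupp ((isClosed_le continuous_const continuous_norm).inter
    (isClosed_le continuous_norm continuous_const))
  have hηc : HasCompactSupport η := .of_support_subset_isCompact (isCompact_closedBall 0 2)
    fun x hx => by simpa using (hsupp hx).2
  obtain ⟨c, hc, hbound⟩ := multiplier_piece_L2_bound_general α (hη.of_le (mod_cast le_top)) hηc
    (contDiff_norm_sq ℝ) fun x hx => by have := (htsupp hx).1; positivity
  exact ⟨c, hc, fun k γ => hbound (4 ^ k) (ρ₀ ^ 2) (by positivity) (sq_nonneg ρ₀) γ⟩
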